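/- arXiv:2101.01458 — 2 statements merged into one kernel-verified Lean document; each statement's English description precedes it below -/
import Mathlib

section
/- For any $0 < \epsilon < 1$ and any positive integer $n$, $\mathrm{Widim}_\epsilon([0,1]^n, d_{l^\infty}) = n$; that is, there is an $\epsilon$-embedding of $([0,1]^n, d_{l^\infty})$ into some polyhedron of dimension $n$, but no $\epsilon$-embedding of $([0,1]^n, d_{l^\infty})$ into any polyhedron of dimension strictly less than $n$. -/
open Set Filter Topology
open scoped ENNReal NNReal symmDiff

/-- Right translate `S·c = {s * c : s ∈ S}` of a subset of a group. -/
def rightTranslate {G : Type*} [Group G] (S : Set G) (c : G) : Set G := (fun s => s * c) '' S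

/-- The boundary set `B(F,T) = {g ∈ G : Tg ∩ F ≠ ∅ and Tg ∩ (G \ F) ≠ ∅}`. -/
def Bset {G : Type*} [Group G] (F T : Set G) : Set G :=
  {g : G | (rightTranslate T g ∩ F).Nonempty ∧ (rightTranslate T g ∩ Fᶜ).Nonempty}

/-- `F` is `(T,ε)`-invariant: `|B(F,T)| < ε * |F|`. -/
def IsInvariantSet {G : Type*} [Group G] (F T : Set G) (ε : ℝ) : Prop :=
  ((Bset F T).ncard : ℝ) < ε * (F.ncard : ℝ)

/-- A Følner sequence of nonempty finite subsets of `G`. -/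
def IsFolnerSeq {G : Type*} [Group G] (F : ℕ → Set G) : Prop :=
  (∀ n, (F n).Finite ∧ (F n).Nonempty) ∧
    ∀ g : G, Tendsto
      (fun n => ((symmDiff (F n) ((fun x => g * x) '' (F n))).ncard : ℝ) / ((F n).ncard : ℝ))
      atTop (nhds 0)

/-- A countable discrete group is amenable if it admits a Følner sequence. -/
def AmenableGroup (G : Type*) [Group G] : Prop := ∃ F : ℕ → Set G, IsFolnerSeq F

/-- A tiling of `G`: pairwise disjoint nonempty finite subsets covering `G`. -/
def IsTilingOf {G : Type*} [Group G] (𝒯 : Set (Set G)) : Prop :=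
  (∀ T ∈ 𝒯, T.Finite ∧ T.Nonempty) ∧
    (∀ T ∈ 𝒯, ∀ T' ∈ 𝒯, T ≠ T' → Disjoint T T') ∧ ⋃₀ 𝒯 = Set.univ

/-- `𝒮` is a (finite) set of shapes for the tiling `𝒯`. -/
def IsShapeSet {G : Type*} [Group G] (𝒯 𝒮 : Set (Set G)) : Prop :=
  𝒮.Finite ∧ (∀ S ∈ 𝒮, S.Finite ∧ S.Nonempty) ∧
    ∀ T ∈ 𝒯, ∃ S ∈ 𝒮, ∃ c : G, T = rightTranslate S c

/-- The center of a shape `S` relative to a tiling `𝒯`. -/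
def center {G : Type*} [Group G] (𝒯 : Set (Set G)) (S : Set G) : Set G :=
  {c : G | rightTranslate S c ∈ 𝒯}

/-- A syndetic subset: `G = F·A` for some finite `F`. -/
def SyndeticSet {G : Type*} [Group G] (A : Set G) : Prop :=
  ∃ F : Set G, F.Finite ∧ Set.image2 (· * ·) F A = Set.univ

/-- The translation `𝒯g = {Tg : T ∈ 𝒯}` of a tiling. -/
def tilingTranslate {G : Type*} [Group G] (𝒯 : Set (Set G)) (g : G) : Set (Set G) :=
  (fun T => rightTranslate T g) '' 𝒯

/-- The restriction `𝒯|_F = {T ∩ F : T ∈ 𝒯}`. -/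
def tilingRestrict {G : Type*} [Group G] (𝒯 : Set (Set G)) (F : Set G) : Set (Set G) :=
  (fun T => T ∩ F) '' 𝒯

/-- The full `G`-shift: `(σ_g x)_h = x_{hg}`. -/
def shift {G K : Type*} [Group G] (g : G) (x : G → K) : G → K := fun h => x (h * g)

/-- A subshift: a closed shift-invariant subset of `K^G`. -/
def IsSubshift {G : Type*} (K : Type*) [Group G] [TopologicalSpace K]
    (X : Set (G → K)) : Prop :=
  IsClosed X ∧ ∀ g : G, ∀ x ∈ X, shift g x ∈ X

/-- A weight `α : G → (0,∞)` with `α e = 1` and `∑ α < ∞`, defining the product metric. -/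
def IsGoodWeight {G : Type*} [Group G] (α : G → ℝ) : Prop :=
  α 1 = 1 ∧ (∀ g, 0 < α g) ∧ Summable α

/-- The metric `ρ(x,y) = ∑_g α_g d(x_g, y_g)` on `K^G`. -/
noncomputable def rhoMetric {G K : Type*} [Group G] [PseudoMetricSpace K] (α : G → ℝ)
    (x y : G → K) : ℝ :=
  ∑' g : G, α g * dist (x g) (y g)

/-- `ρ_F(x,y) = max_{g ∈ F} ρ(gx, gy)` for finite `F ⊆ G`. -/
noncomputable def rhoMetricF {G K : Type*} [Group G] [PseudoMetricSpace K] (α : G → ℝ)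
    (F : Set G) (x y : G → K) : ℝ :=
  sSup ((fun g => rhoMetric α (shift g x) (shift g y)) '' F)

/-- `d_F(x,y) = max_{g∈F} d(gx, gy)` for an action `φ`. -/
noncomputable def dynDist {G X : Type*} [Group G] [PseudoMetricSpace X]
    (φ : G → X → X) (F : Set G) (x y : X) : ℝ :=
  sSup ((fun g => dist (φ g x) (φ g y)) '' F)

/-- An `ε`-embedding w.r.t. `ρ`: continuous, and `f x = f y → ρ x y < ε`. -/
def IsEpsEmb {X Y : Type*} [TopologicalSpace X] [TopologicalSpace Y]
    (ρ : X → X → ℝ) (ε : ℝ) (f : X → Y) : Prop :=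
  Continuous f ∧ ∀ x y, f x = f y → ρ x y < ε

/-- `Widim_ε(X,ρ) ≤ n`: there is an `ε`-embedding of `X` into (the geometric realization of)
a finite simplicial complex all of whose faces have at most `n+1` vertices. -/
def WidimLE (X : Type*) [TopologicalSpace X] (ρ : X → X → ℝ) (ε : ℝ) (n : ℕ) : Prop :=
  ∃ (N : ℕ) (P : Geometry.SimplicialComplex ℝ (Fin N → ℝ)),
    P.faces.Finite ∧ (∀ s ∈ P.faces, s.card ≤ n + 1) ∧
      ∃ f : X → P.space, IsEpsEmb ρ ε f

/-- `Widim_ε(X,ρ)`: the minimum dimension of a polyhedron admitting an `ε`-embedding of `X`. -/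
noncomputable def widim (X : Type*) [TopologicalSpace X] (ρ : X → X → ℝ) (ε : ℝ) : ℕ∞ :=
  sInf {n : ℕ∞ | ∃ m : ℕ, n = (m : ℕ∞) ∧ WidimLE X ρ ε m}

/-- Covering dimension `≤ n`: every open cover admits an open refinement of multiplicity `≤ n+1`. -/
def DimLE (X : Type*) [TopologicalSpace X] (n : ℕ) : Prop :=
  ∀ 𝒰 : Set (Set X), (∀ U ∈ 𝒰, IsOpen U) → ⋃₀ 𝒰 = Set.univ →
    ∃ 𝒱 : Set (Set X), (∀ V ∈ 𝒱, IsOpen V) ∧ ⋃₀ 𝒱 = Set.univ ∧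
      (∀ V ∈ 𝒱, ∃ U ∈ 𝒰, V ⊆ U) ∧
      ∀ x : X, ({V ∈ 𝒱 | x ∈ V}).Finite ∧ ({V ∈ 𝒱 | x ∈ V}).ncard ≤ n + 1

/-- Topological (covering) dimension, valued in `ℕ∞`. -/
noncomputable def covDim (X : Type*) [TopologicalSpace X] : ℕ∞ :=
  sInf {n : ℕ∞ | ∃ m : ℕ, n = (m : ℕ∞) ∧ DimLE X m}

/-- Mean dimension of the action `φ` computed along the Følner sequence `F`
(as `sup_{ε>0} limsup_n Widim_ε(X, d_{F_n}) / |F_n|`). -/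
noncomputable def mdimAlong {G X : Type*} [Group G] [PseudoMetricSpace X]
    (φ : G → X → X) (F : ℕ → Set G) : ℝ≥0∞ :=
  ⨆ ε : {ε : ℝ // 0 < ε}, Filter.limsup
    (fun n => ((widim X (dynDist φ (F n)) ε.1 : ℕ∞) : ℝ≥0∞) / ((F n).ncard : ℝ≥0∞)) atTop

/-- Mean dimension of a subshift `X ⊆ K^G` computed along the Følner sequence `F`,
with the metric `ρ` induced by the weight `α`. -/
noncomputable def mdimSubshift {G K : Type*} [Group G] [PseudoMetricSpace K] (α : G → ℝ)
    (X : Set (G → K)) (F : ℕ → Set G) : ℝ≥0∞ :=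
  ⨆ ε : {ε : ℝ // 0 < ε}, Filter.limsup
    (fun n => ((widim X (fun x y : X => rhoMetricF α (F n) x.1 y.1) ε.1 : ℕ∞) : ℝ≥0∞) /
      ((F n).ncard : ℝ≥0∞)) atTop

/-- The canonical projection `π_F : K^G → K^F`. -/
def projTo {G K : Type*} (F : Set G) (x : G → K) : F → K := fun g => x g.1

/-- The tripod (cone over three points), realized as the subset of `ℝ³` of points with at most
one nonzero coordinate, each coordinate lying in `[0,1]`; the ℓ¹-distance on this set is exactly
the graph distance in which each of the three edges has length one. -/
def TripodSet : Set (Fin 3 → ℝ) :=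
  {x | (∀ i, x i ∈ Set.Icc (0 : ℝ) 1) ∧ ∀ i j : Fin 3, i ≠ j → x i = 0 ∨ x j = 0}

/-- The graph distance on the tripod (= the ℓ¹-distance of the ambient `ℝ³`). -/
noncomputable def tripodDist (x y : TripodSet) : ℝ := ∑ i, |x.1 i - y.1 i|

/-- The `l^∞`-distance on `P^n` for the tripod `P`. -/
noncomputable def tripodDistInf {n : ℕ} (x y : Fin n → TripodSet) : ℝ :=
  sSup (Set.range fun i => tripodDist (x i) (y i))

/-! For the lower bound, let `ψ` be a `C¹` self-map of the cube that preserves the `i`-th coordinate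
on the faces `x i = 0` and `x i = 1`. For small `t > 0` the map `id + t (ψ - id)` is a bijection of
the cube with positive Jacobian, so its Jacobian has integral `1`. This integral is a polynomial in
`t`, so it equals `1` at `t = 1` as well, and the Jacobian of `ψ` cannot vanish identically (a trick
of Milnor and Rogers). Composing with a smooth step function turns this into the Poincaré–Miranda
theorem. If `f` maps the cube to a polyhedron and separates opposite faces, then the differences of
the distances to the images of opposite faces define a Lipschitz map `H` from the polyhedron to
`ℝⁿ`; by Poincaré–Miranda, the image of `H ∘ f` is a neighbourhood of `0`, so the polyhedron has
Hausdorff dimension at least `n`. For the upper bound, a rescaled copy of the cube lies in an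
`n`-simplex. -/

section Jacobian

open MeasureTheory Polynomial

theorem integral_eval_eq_of_infinite {𝕜 α : Type*} [RCLike 𝕜] [MeasurableSpace α]
    {μ : Measure α} {p : α → 𝕜[X]} {d : ℕ} {S : Set 𝕜} {c : 𝕜} (hdeg : ∀ x, (p x).natDegree ≤ d)
    (hS : S.Infinite) (hint : ∀ t ∈ S, Integrable (fun x => (p x).eval t) μ)
    (hc : ∀ t ∈ S, ∫ x, (p x).eval t ∂μ = c) (s : 𝕜) : ∫ x, (p x).eval s ∂μ = c := by
  obtain ⟨T, hTS, hT⟩ := hS.exists_subset_card_eq (d + 1)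
  have hT0 : T.Nonempty := Finset.card_pos.1 (by lia)
  have interpolation (x : α) :
      (p x).eval s = ∑ t ∈ T, (Lagrange.basis T id t).eval s * (p x).eval t := by
    have hlt : (p x).degree < T.card := by
      rw [hT]
      exact degree_le_natDegree.trans_lt (by exact_mod_cast Nat.lt_succ_of_le (hdeg x))
    conv_lhs => rw [Lagrange.eq_interpolate (v := id) Function.injective_id.injOn hlt]
    simp [Lagrange.interpolate_apply, eval_finsetSum, mul_comm]
  calc ∫ x, (p x).eval s ∂μ
      = ∑ t ∈ T, (Lagrange.basis T id t).eval s * ∫ x, (p x).eval t ∂μ := by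
        simp_rw [interpolation]
        rw [integral_finsetSum _ fun t ht => (hint t (hTS ht)).const_mul _]
        simp_rw [integral_const_mul]
    _ = (∑ t ∈ T, Lagrange.basis T id t).eval s * c := by
        rw [eval_finsetSum, Finset.sum_mul]
        exact Finset.sum_congr rfl fun t ht => by rw [hc t (hTS ht)]
    _ = c := by
        rw [Lagrange.sum_basis (v := id) Function.injective_id.injOn hT0, eval_one, one_mul]

theorem exists_polynomial_eval_eq_det_one_add_smul {R M : Type*} [CommRing R] [Nontrivial R]
    [AddCommGroup M] [Module R M] [Module.Free R M] [Module.Finite R M] (A : Module.End R M) :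
    ∃ p : R[X], p.natDegree ≤ Module.finrank R M ∧
      ∀ t, p.eval t = LinearMap.det (1 + t • A) := by
  classical
  let b := Module.finBasis R M
  let B := LinearMap.toMatrix b b A
  refine ⟨((X : R[X]) • B.map C + (1 : Matrix _ _ R).map C).det, ?_, fun t => ?_⟩
  · exact (natDegree_det_X_add_C_le B 1).trans_eq (Fintype.card_fin _)
  · rw [← coe_evalRingHom, RingHom.map_det, ← LinearMap.det_toMatrix b]
    congr 1
    ext i j
    rcases eq_or_ne i j with rfl | hij
    · simp [B, LinearMap.toMatrix_one, add_comm, mul_comm t]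
    · simp [B, LinearMap.toMatrix_one, hij, mul_comm t]

theorem injOn_add_of_lipschitzOnWith {E : Type*} [NormedAddCommGroup E] {K : ℝ≥0} (hK : K < 1)
    {h : E → E} {s : Set E} (hh : LipschitzOnWith K h s) : InjOn (fun x => x + h x) s := by
  intro x hx y hy hxy
  have hdist : dist x y = dist (h x) (h y) := by
    rw [dist_comm (h x), dist_eq_norm, dist_eq_norm, sub_eq_sub_iff_add_eq_add.2]
    exact hxy.trans (add_comm y (h y))
  have hle : dist x y ≤ K * dist x y := hdist.trans_le (hh.dist_le_mul x hx y hy)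
  have hK' : (K : ℝ) < 1 := hK
  exact dist_le_zero.1 (by nlinarith [hK', dist_nonneg (x := x) (y := y)])

variable {ι : Type*}

/-- The coordinatewise nearest-point retraction of `ℝ^ι` onto the unit cube. -/
noncomputable def cubeProj (x : ι → ℝ) : ι → Icc (0 : ℝ) 1 :=
  fun i => projIcc 0 1 zero_le_one (x i)

theorem coe_cubeProj_apply {x : ι → ℝ} (hx : x ∈ Icc (0 : ι → ℝ) 1) (i : ι) :
    (cubeProj x i : ℝ) = x i :=
  congrArg Subtype.val (projIcc_of_mem zero_le_one ⟨hx.1 i, hx.2 i⟩)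

theorem continuous_cubeProj : Continuous (cubeProj : (ι → ℝ) → ι → Icc (0 : ℝ) 1) :=
  continuous_pi fun i => continuous_projIcc.comp (continuous_apply i)

theorem coe_mem_Icc (z : ι → Icc (0 : ℝ) 1) : (fun i => (z i : ℝ)) ∈ Icc (0 : ι → ℝ) 1 :=
  ⟨fun i => (z i).2.1, fun i => (z i).2.2⟩

variable [Fintype ι]

theorem dist_cubeProj_le (x y : ι → ℝ) : dist (cubeProj x) (cubeProj y) ≤ dist x y :=
  (dist_pi_le_iff dist_nonneg).2 fun i =>
    ((LipschitzWith.projIcc zero_le_one).dist_le_mul (x i) (y i)).trans <| by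
      simpa using dist_le_pi_dist x y i

theorem surjOn_Icc_add_of_lipschitzOnWith {K : ℝ≥0} (hK : K < 1) {h : (ι → ℝ) → ι → ℝ}
    (hh : LipschitzOnWith K h (Icc 0 1))
    (hface : ∀ x ∈ Icc (0 : ι → ℝ) 1, ∀ i, x i = 0 ∨ x i = 1 → h x i = 0) :
    SurjOn (fun x => x + h x) (Icc 0 1) (Icc 0 1) := by
  intro y hy
  have contracting : ContractingWith K
      fun z : ι → Icc (0 : ℝ) 1 => cubeProj (y - h fun i => (z i : ℝ)) := by
    refine ⟨hK, LipschitzWith.of_dist_le_mul fun z w => ?_⟩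
    calc dist (cubeProj (y - h fun i => (z i : ℝ))) (cubeProj (y - h fun i => (w i : ℝ)))
        ≤ dist (y - h fun i => (z i : ℝ)) (y - h fun i => (w i : ℝ)) := dist_cubeProj_le _ _
      _ = dist (h fun i => (z i : ℝ)) (h fun i => (w i : ℝ)) := dist_sub_left _ _ _
      _ ≤ K * dist z w := hh.dist_le_mul _ (coe_mem_Icc z) _ (coe_mem_Icc w)
  obtain ⟨z, hz⟩ : ∃ z : ι → Icc (0 : ℝ) 1, cubeProj (y - h fun i => (z i : ℝ)) = z :=
    ⟨_, contracting.fixedPoint_isFixedPt⟩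
  set x : ι → ℝ := fun i => (z i : ℝ)
  refine ⟨x, coe_mem_Icc z, funext fun i => ?_⟩
  have hxi : max 0 (min 1 (y i - h x i)) = x i := congrArg Subtype.val (congrFun hz i)
  have hface_i : x i = 0 ∨ x i = 1 → h x i = 0 := hface x (coe_mem_Icc z) i
  have hy0 : 0 ≤ y i := hy.1 i
  have hy1 : y i ≤ 1 := hy.2 i
  change x i + h x i = y i
  -- Where the projection moves coordinate `i`, the point `x` is on a face, so `h x i` vanishes.
  rcases le_total (y i - h x i) 0 with h0 | h0
  · rw [min_eq_right (by linarith), max_eq_left h0] at hxi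
    linarith [hface_i (.inl hxi.symm)]
  rcases le_total 1 (y i - h x i) with h1 | h1
  · rw [min_eq_left h1, max_eq_right zero_le_one] at hxi
    linarith [hface_i (.inr hxi.symm)]
  · rw [min_eq_right h1, max_eq_right h0] at hxi
    linarith

theorem eventually_det_one_add_pos {E : Type*} [NormedAddCommGroup E] [NormedSpace ℝ E] :
    ∀ᶠ A : E →L[ℝ] E in 𝓝 0, 0 < (1 + A).det := by
  have hcont : ContinuousAt (fun A : E →L[ℝ] E => (1 + A).det) 0 :=
    (ContinuousLinearMap.continuous_det.comp (continuous_const.add continuous_id)).continuousAt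
  refine hcont.eventually (lt_mem_nhds ?_)
  simp [ContinuousLinearMap.det]

theorem setIntegral_det_eq_measureReal_image {E : Type*} [NormedAddCommGroup E]
    [NormedSpace ℝ E] [FiniteDimensional ℝ E] [MeasurableSpace E] [BorelSpace E] (μ : Measure E)
    [μ.IsAddHaarMeasure] {s : Set E} (hs : MeasurableSet s) {f : E → E} {f' : E → E →L[ℝ] E}
    (hf : ∀ x ∈ s, HasFDerivWithinAt f (f' x) s x) (hinj : InjOn f s)
    (hdet : ∀ x ∈ s, 0 ≤ (f' x).det) : ∫ x in s, (f' x).det ∂μ = μ.real (f '' s) := by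
  have hcov := integral_image_eq_integral_abs_det_fderiv_smul μ hs hf hinj fun _ => (1 : ℝ)
  rw [setIntegral_const, smul_eq_mul, mul_one] at hcov
  rw [hcov]
  exact setIntegral_congr_fun hs fun x hx => by simp [abs_of_nonneg (hdet x hx)]

theorem setIntegral_Icc_det_one_add_eq_one {K : ℝ≥0} (hK : K < 1) {h : (ι → ℝ) → ι → ℝ}
    {h' : (ι → ℝ) → (ι → ℝ) →L[ℝ] ι → ℝ}
    (hderiv : ∀ x ∈ Icc (0 : ι → ℝ) 1, HasFDerivWithinAt h (h' x) (Icc 0 1) x)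
    (hbound : ∀ x ∈ Icc (0 : ι → ℝ) 1, ‖h' x‖₊ ≤ K)
    (hmaps : MapsTo (fun x => x + h x) (Icc 0 1) (Icc 0 1))
    (hface : ∀ x ∈ Icc (0 : ι → ℝ) 1, ∀ i, x i = 0 ∨ x i = 1 → h x i = 0)
    (hdet : ∀ x ∈ Icc (0 : ι → ℝ) 1, 0 ≤ (1 + h' x).det) :
    ∫ x in Icc (0 : ι → ℝ) 1, (1 + h' x).det = 1 := by
  have hlip : LipschitzOnWith K h (Icc 0 1) :=
    (convex_Icc 0 1).lipschitzOnWith_of_nnnorm_hasFDerivWithin_le hderiv hbound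
  have bij : BijOn (fun x => x + h x) (Icc 0 1) (Icc 0 1) :=
    ⟨hmaps, injOn_add_of_lipschitzOnWith hK hlip, surjOn_Icc_add_of_lipschitzOnWith hK hlip hface⟩
  have hderiv_add (x) (hx : x ∈ Icc (0 : ι → ℝ) 1) :
      HasFDerivWithinAt (fun x => x + h x) (1 + h' x) (Icc 0 1) x :=
    (hasFDerivWithinAt_id x _).add (hderiv x hx)
  rw [setIntegral_det_eq_measureReal_image volume measurableSet_Icc hderiv_add bij.injOn hdet,
    bij.image_eq]
  simp [measureReal_def, Real.volume_Icc_pi]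

theorem eventually_setIntegral_Icc_det_one_add_smul_eq_one {g : (ι → ℝ) → ι → ℝ}
    (hg : ContDiff ℝ 1 g) (hmaps : MapsTo (fun x => x + g x) (Icc 0 1) (Icc 0 1))
    (hface : ∀ x ∈ Icc (0 : ι → ℝ) 1, ∀ i, x i = 0 ∨ x i = 1 → g x i = 0) :
    ∀ᶠ t : ℝ in 𝓝[>] 0, ∫ x in Icc (0 : ι → ℝ) 1, (1 + t • fderiv ℝ g x).det = 1 := by
  have small : ∀ᶠ t : ℝ in 𝓝 0, ∀ x ∈ Icc (0 : ι → ℝ) 1,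
      ‖t • fderiv ℝ g x‖ ≤ 1 / 2 ∧ 0 < (1 + t • fderiv ℝ g x).det := by
    refine isCompact_Icc.eventually_forall_of_forall_eventually fun x _ => ?_
    have htendsto : Tendsto (fun q : ℝ × (ι → ℝ) => q.1 • fderiv ℝ g q.2) (𝓝 (0, x)) (𝓝 0) :=
      (continuous_fst.smul ((hg.continuous_fderiv one_ne_zero).comp continuous_snd)).tendsto' _ _
        (zero_smul ℝ _)
    filter_upwards [htendsto.eventually eventually_det_one_add_pos,
      htendsto.eventually (Metric.ball_mem_nhds 0 one_half_pos)] with q hpos hnorm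
    exact ⟨(mem_ball_zero_iff.1 hnorm).le, hpos⟩
  filter_upwards [nhdsWithin_le_nhds small, Ioo_mem_nhdsGT one_pos] with t ht ⟨ht0, ht1⟩
  refine setIntegral_Icc_det_one_add_eq_one (K := 1 / 2) (h := fun x => t • g x)
    (NNReal.half_lt_self one_ne_zero) (fun x _ => ?_) (fun x hx => ?_) (fun x hx => ?_)
    (fun x hx i hi => ?_) fun x hx => (ht x hx).2.le
  · exact ((hg.differentiable one_ne_zero x).hasFDerivAt.const_smul t).hasFDerivWithinAt
  · exact_mod_cast (ht x hx).1
  · exact (convex_Icc 0 1).add_smul_mem hx (hmaps hx) ⟨ht0.le, ht1.le⟩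
  · simp [hface x hx i hi]

theorem setIntegral_Icc_det_fderiv_eq_one {ψ : (ι → ℝ) → ι → ℝ} (hψ : ContDiff ℝ 1 ψ)
    (hmaps : MapsTo ψ (Icc 0 1) (Icc 0 1))
    (hface : ∀ x ∈ Icc (0 : ι → ℝ) 1, ∀ i, x i = 0 ∨ x i = 1 → ψ x i = x i) :
    ∫ x in Icc (0 : ι → ℝ) 1, (fderiv ℝ ψ x).det = 1 := by
  set g : (ι → ℝ) → ι → ℝ := fun x => ψ x - x with hg_def
  have hg : ContDiff ℝ 1 g := hψ.sub contDiff_id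
  have hfderiv (x : ι → ℝ) : 1 + (1 : ℝ) • fderiv ℝ g x = fderiv ℝ ψ x := by
    rw [hg_def, fderiv_fun_sub (hψ.differentiable one_ne_zero x) differentiableAt_fun_id,
      fderiv_fun_id, one_smul]
    exact add_sub_cancel _ _
  choose p hdeg heval using fun x : ι → ℝ =>
    exists_polynomial_eval_eq_det_one_add_smul (fderiv ℝ g x : Module.End ℝ (ι → ℝ))
  have hp (x : ι → ℝ) (t : ℝ) : (p x).eval t = (1 + t • fderiv ℝ g x).det := heval x t
  obtain ⟨u, hu, hsmall⟩ := mem_nhdsGT_iff_exists_Ioo_subset.1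
    (eventually_setIntegral_Icc_det_one_add_smul_eq_one hg
      (fun x hx => by simpa [g] using hmaps hx) fun x hx i hi => by simp [g, hface x hx i hi])
  have hint (t : ℝ) : IntegrableOn (fun x => (p x).eval t) (Icc (0 : ι → ℝ) 1) := by
    simp only [hp]
    exact (ContinuousLinearMap.continuous_det.comp (continuous_const.add
      ((hg.continuous_fderiv one_ne_zero).const_smul t))).continuousOn.integrableOn_compact
      isCompact_Icc
  have key := integral_eval_eq_of_infinite (c := 1) hdeg (Ioo_infinite hu) (fun t _ => hint t)
    (fun t ht => by simpa only [hp] using show _ = _ from hsmall ht) 1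
  simpa only [hp, hfderiv] using key

theorem det_eq_zero_of_forall_apply_eq_zero {R n : Type*} [CommRing R] [Finite n]
    {A : Module.End R (n → R)} {i : n} (hA : ∀ v, A v i = 0) : LinearMap.det A = 0 := by
  classical
  cases nonempty_fintype n
  rw [← LinearMap.det_toMatrix']
  exact Matrix.det_eq_zero_of_row_eq_zero i fun j => hA _

theorem deriv_smoothTransition_of_notMem_Ioo {y : ℝ} (hy : y ∉ Ioo 0 1) :
    deriv Real.smoothTransition y = 0 := by
  rcases le_or_gt y 0 with h0 | h0
  · refine IsLocalMin.deriv_eq_zero (Eventually.of_forall fun z => ?_)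
    rw [Real.smoothTransition.zero_of_nonpos h0]
    exact Real.smoothTransition.nonneg z
  · refine IsLocalMax.deriv_eq_zero (Eventually.of_forall fun z => ?_)
    rw [Real.smoothTransition.one_of_one_le (not_lt.1 fun h1 => hy ⟨h0, h1⟩)]
    exact Real.smoothTransition.le_one z

theorem exists_forall_apply_mem_Ioo_of_contDiff {p : (ι → ℝ) → ι → ℝ} (hp : ContDiff ℝ 1 p)
    (h0 : ∀ x ∈ Icc (0 : ι → ℝ) 1, ∀ i, x i = 0 → p x i ≤ 0)
    (h1 : ∀ x ∈ Icc (0 : ι → ℝ) 1, ∀ i, x i = 1 → 1 ≤ p x i) :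
    ∃ x ∈ Icc (0 : ι → ℝ) 1, ∀ i, p x i ∈ Ioo 0 1 := by
  by_contra! hout
  have hs : ContDiff ℝ 1 Real.smoothTransition := Real.smoothTransition.contDiff
  have hψ : ContDiff ℝ 1 fun x i => Real.smoothTransition (p x i) :=
    contDiff_pi.2 fun i => hs.comp (contDiff_pi.1 hp i)
  have hone := setIntegral_Icc_det_fderiv_eq_one hψ
    (fun x _ => ⟨fun i => Real.smoothTransition.nonneg _, fun i => Real.smoothTransition.le_one _⟩)
    fun x hx i hi => by
      rcases hi with hi | hi
      · rw [hi, Real.smoothTransition.zero_of_nonpos (h0 x hx i hi)]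
      · rw [hi, Real.smoothTransition.one_of_one_le (h1 x hx i hi)]
  -- The step function is flat outside `(0, 1)`, so some row of the Jacobian vanishes everywhere.
  refine zero_ne_one ((setIntegral_eq_zero_of_forall_eq_zero fun x hx => ?_).symm.trans hone)
  obtain ⟨i, hi⟩ := hout x hx
  have hderiv : HasFDerivAt (fun x => Real.smoothTransition (p x i))
      (0 : (ι → ℝ) →L[ℝ] ℝ) x := by
    have hpi : HasFDerivAt (fun x => p x i) (fderiv ℝ (fun x => p x i) x) x :=
      ((contDiff_pi.1 hp i).differentiable one_ne_zero x).hasFDerivAt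
    have hsi : HasDerivAt Real.smoothTransition 0 (p x i) :=
      deriv_smoothTransition_of_notMem_Ioo hi ▸
        (hs.differentiable one_ne_zero (p x i)).hasDerivAt
    rw [← zero_smul ℝ (fderiv ℝ (fun x => p x i) x)]
    exact HasDerivAt.comp_hasFDerivAt x hsi hpi
  refine det_eq_zero_of_forall_apply_eq_zero (i := i) fun v => ?_
  have hrow := (hasFDerivAt_pi'.1 (hψ.differentiable one_ne_zero x).hasFDerivAt i).unique hderiv
  exact congrArg (fun L : (ι → ℝ) →L[ℝ] ℝ => L v) hrow

end Jacobian

theorem exists_norm_lt_of_signs_on_faces {ι : Type*} [Fintype ι]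
    {f : (ι → Icc (0 : ℝ) 1) → ι → ℝ} (hf : Continuous f) (h0 : ∀ x i, x i = 0 → f x i ≤ 0)
    (h1 : ∀ x i, x i = 1 → 0 ≤ f x i) {δ : ℝ} (hδ : 0 < δ) :
    ∃ x, ‖f x‖ < δ := by
  -- The affine term gives the signs on the faces a margin that survives smoothing.
  let G : (ι → ℝ) → ι → ℝ := fun x i => 2 / δ * f (cubeProj x) i + (2 * cubeProj x i - 1 / 2)
  have hG : Continuous G := by
    have := continuous_cubeProj (ι := ι)
    fun_prop
  obtain ⟨g, hg, hgG, -⟩ := hG.exists_contDiff_approx 1 (ε := fun _ => 1 / 2) continuous_const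
    fun _ => one_half_pos
  have hclose (x : ι → ℝ) (i : ι) : |g x i - G x i| < 1 / 2 :=
    (dist_le_pi_dist (g x) (G x) i).trans_lt (hgG x)
  have hg0 (x) (hx : x ∈ Icc (0 : ι → ℝ) 1) (i : ι) (hi : x i = 0) : g x i ≤ 0 := by
    have hzi : cubeProj x i = 0 := Subtype.ext ((coe_cubeProj_apply hx i).trans hi)
    have hfi : 2 / δ * f (cubeProj x) i ≤ 0 :=
      mul_nonpos_of_nonneg_of_nonpos (by positivity) (h0 _ i hzi)
    have hGi := (abs_lt.1 (hclose x i)).2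
    simp only [G, hzi, Icc.coe_zero] at hGi
    linarith
  have hg1 (x) (hx : x ∈ Icc (0 : ι → ℝ) 1) (i : ι) (hi : x i = 1) : 1 ≤ g x i := by
    have hzi : cubeProj x i = 1 := Subtype.ext ((coe_cubeProj_apply hx i).trans hi)
    have hfi : 0 ≤ 2 / δ * f (cubeProj x) i := mul_nonneg (by positivity) (h1 _ i hzi)
    have hGi := (abs_lt.1 (hclose x i)).1
    simp only [G, hzi, Icc.coe_one] at hGi
    linarith
  obtain ⟨x, -, hgx⟩ := exists_forall_apply_mem_Ioo_of_contDiff hg hg0 hg1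
  refine ⟨cubeProj x, (pi_norm_lt_iff hδ).2 fun i => ?_⟩
  have hf2 : |2 / δ * f (cubeProj x) i| < 2 := by
    have hi := abs_lt.1 (hclose x i)
    have hxi := (cubeProj x i).2
    simp only [G] at hi
    rw [abs_lt]
    constructor <;> linarith [(hgx i).1, (hgx i).2, hxi.1, hxi.2]
  rw [Real.norm_eq_abs]
  rwa [abs_mul, abs_of_pos (by positivity), div_mul_eq_mul_div, div_lt_iff₀ hδ,
    mul_lt_mul_iff_right₀ two_pos] at hf2

theorem poincare_miranda {ι : Type*} [Finite ι] {f : (ι → Icc (0 : ℝ) 1) → ι → ℝ}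
    (hf : Continuous f) (h0 : ∀ x i, x i = 0 → f x i ≤ 0) (h1 : ∀ x i, x i = 1 → 0 ≤ f x i) :
    ∃ x, f x = 0 := by
  cases nonempty_fintype ι
  obtain ⟨x, -, hmin⟩ := isCompact_univ.exists_isMinOn univ_nonempty hf.norm.continuousOn
  refine ⟨x, by_contra fun hx => ?_⟩
  obtain ⟨y, hy⟩ := exists_norm_lt_of_signs_on_faces hf h0 h1 (norm_pos_iff.2 hx)
  exact hy.not_ge (hmin (mem_univ y))

theorem range_mem_nhds_zero_of_strict_signs_on_faces {ι : Type*} [Finite ι]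
    {f : (ι → Icc (0 : ℝ) 1) → ι → ℝ} (hf : Continuous f) (h0 : ∀ x i, x i = 0 → f x i < 0)
    (h1 : ∀ x i, x i = 1 → 0 < f x i) : range f ∈ 𝓝 0 := by
  have sign : ∀ᶠ c : ι → ℝ in 𝓝 0, ∀ x ∈ (univ : Set (ι → Icc (0 : ℝ) 1)), ∀ i,
      (x i = 0 → f x i < c i) ∧ (x i = 1 → c i < f x i) := by
    refine isCompact_univ.eventually_forall_of_forall_eventually fun x _ =>
      eventually_all.2 fun i => ?_
    have hxi : Tendsto (fun q : (ι → ℝ) × (ι → Icc (0 : ℝ) 1) => q.2 i) (𝓝 (0, x)) (𝓝 (x i)) :=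
      Continuous.tendsto' (by fun_prop) _ _ rfl
    have hfi : Tendsto (fun q : (ι → ℝ) × (ι → Icc (0 : ℝ) 1) => f q.2 i - q.1 i) (𝓝 (0, x))
        (𝓝 (f x i)) :=
      Continuous.tendsto' (by fun_prop) _ _ (by simp)
    refine Eventually.and ?_ ?_
    · by_cases hi : x i = 0
      · filter_upwards [hfi.eventually (gt_mem_nhds (h0 x i hi))] with q hq _ using sub_neg.1 hq
      · filter_upwards [hxi.eventually_ne hi] with q hq hq0 using absurd hq0 hq
    · by_cases hi : x i = 1
      · filter_upwards [hfi.eventually (lt_mem_nhds (h1 x i hi))] with q hq _ using sub_pos.1 hq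
      · filter_upwards [hxi.eventually_ne hi] with q hq hq1 using absurd hq1 hq
  filter_upwards [sign] with c hc
  obtain ⟨x, hx⟩ := poincare_miranda (f := fun x => f x - c)
    (hf.sub continuous_const) (fun x i hi => sub_nonpos.2 ((hc x trivial i).1 hi).le)
    fun x i hi => sub_nonneg.2 ((hc x trivial i).2 hi).le
  exact ⟨x, sub_eq_zero.1 hx⟩

theorem card_le_dimH_range_of_opposite_faces_ne {ι Y : Type*} [Fintype ι] [MetricSpace Y]
    {f : (ι → Icc (0 : ℝ) 1) → Y} (hf : Continuous f)
    (hfaces : ∀ i x y, x i = 0 → y i = 1 → f x ≠ f y) :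
    (Fintype.card ι : ℝ≥0∞) ≤ dimH (range f) := by
  let A (i : ι) : Set Y := f '' {x | x i = 0}
  let B (i : ι) : Set Y := f '' {x | x i = 1}
  have hA (i : ι) : IsClosed (A i) :=
    ((isClosed_eq (continuous_apply i) continuous_const).isCompact.image hf).isClosed
  have hB (i : ι) : IsClosed (B i) :=
    ((isClosed_eq (continuous_apply i) continuous_const).isCompact.image hf).isClosed
  have hA0 (i : ι) : (A i).Nonempty := ⟨f 0, 0, rfl, rfl⟩
  have hB0 (i : ι) : (B i).Nonempty := ⟨f 1, 1, rfl, rfl⟩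
  let H (y : Y) (i : ι) : ℝ := Metric.infDist y (A i) - Metric.infDist y (B i)
  have hH : LipschitzWith 2 H := by
    refine LipschitzWith.of_dist_le_mul fun y z => (dist_pi_le_iff (by positivity)).2 fun i => ?_
    calc dist (H y i) (H z i)
        ≤ dist (Metric.infDist y (A i)) (Metric.infDist z (A i)) +
          dist (Metric.infDist y (B i)) (Metric.infDist z (B i)) := dist_sub_sub_le _ _ _ _
      _ ≤ dist y z + dist y z :=
        add_le_add (by simpa using (Metric.lipschitz_infDist_pt (A i)).dist_le_mul y z)
          (by simpa using (Metric.lipschitz_infDist_pt (B i)).dist_le_mul y z)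
      _ = 2 * dist y z := by ring
  have hrange : range (H ∘ f) ∈ 𝓝 0 := by
    refine range_mem_nhds_zero_of_strict_signs_on_faces (hH.continuous.comp hf) (fun x i hx => ?_)
      fun x i hx => ?_
    · have hpos := ((hB i).notMem_iff_infDist_pos (hB0 i)).1
        fun ⟨y, hy, hyx⟩ => hfaces i x y hx hy hyx.symm
      have hzero : Metric.infDist (f x) (A i) = 0 :=
        Metric.infDist_zero_of_mem (mem_image_of_mem f hx)
      exact sub_neg.2 (hzero.trans_lt hpos)
    · have hpos := ((hA i).notMem_iff_infDist_pos (hA0 i)).1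
        fun ⟨y, hy, hyx⟩ => hfaces i y x hy hx hyx
      have hzero : Metric.infDist (f x) (B i) = 0 :=
        Metric.infDist_zero_of_mem (mem_image_of_mem f hx)
      exact sub_pos.2 (hzero.trans_lt hpos)
  calc (Fintype.card ι : ℝ≥0∞) = dimH (range (H ∘ f)) := by
        rw [Real.dimH_of_mem_nhds hrange, Module.finrank_fintype_fun_eq_card]
    _ = dimH (H '' range f) := by rw [range_comp]
    _ ≤ dimH (range f) := hH.dimH_image_le _

theorem dimH_space_le_of_forall_card_le {E : Type*} [NormedAddCommGroup E] [NormedSpace ℝ E]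
    [FiniteDimensional ℝ E] {P : Geometry.SimplicialComplex ℝ E} {m : ℕ}
    (hP : P.faces.Countable) (hcard : ∀ s ∈ P.faces, s.card ≤ m + 1) : dimH P.space ≤ m := by
  classical
  rw [Geometry.SimplicialComplex.space, dimH_bUnion hP]
  refine iSup₂_le fun s hs => ?_
  have hne : s.Nonempty := Geometry.SimplicialComplex.nonempty_of_mem_faces hs
  rw [Real.Convex.dimH_eq_finrank_vectorSpan (convex_convexHull ℝ _) hne.to_set.convexHull,
    ← direction_affineSpan, affineSpan_convexHull, direction_affineSpan]
  have hdim := finrank_vectorSpan_image_finset_le ℝ id s (Nat.sub_add_cancel hne.card_pos).symm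
  rw [Finset.image_id] at hdim
  exact_mod_cast hdim.trans (Nat.sub_le_of_le_add (hcard s hs))

theorem not_widimLE_of_card_lt {ι : Type*} [Fintype ι] {ε : ℝ} (hε : ε ≤ 1) {m : ℕ}
    (hm : m < Fintype.card ι) : ¬ WidimLE (ι → Icc (0 : ℝ) 1) dist ε m := by
  rintro ⟨N, P, hfin, hcard, f, hf, hfε⟩
  have hfaces (i : ι) (x y : ι → Icc (0 : ℝ) 1) (hx : x i = 0) (hy : y i = 1) : f x ≠ f y := by
    intro hxy
    have hdist : dist (x i) (y i) = 1 := by simp [hx, hy, Subtype.dist_eq]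
    exact (hfε x y hxy).not_ge (hε.trans (hdist.symm.trans_le (dist_le_pi_dist x y i)))
  have hle : (Fintype.card ι : ℝ≥0∞) ≤ m :=
    calc (Fintype.card ι : ℝ≥0∞) ≤ dimH (range fun x => (f x : Fin N → ℝ)) :=
          card_le_dimH_range_of_opposite_faces_ne (continuous_subtype_val.comp hf)
            fun i x y hx hy hxy => hfaces i x y hx hy (Subtype.ext hxy)
      _ ≤ dimH P.space := dimH_mono (range_subset_iff.2 fun x => (f x).2)
      _ ≤ m := dimH_space_le_of_forall_card_le hfin.countable hcard
  exact hm.not_ge (by exact_mod_cast hle)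

/-- The simplicial complex of all faces of the simplex spanned by an affinely independent finite
set `V` of vertices. -/
noncomputable def fullSimplex {E : Type*} [AddCommGroup E] [Module ℝ E] [DecidableEq E]
    (V : Finset E) (hV : AffineIndependent ℝ ((↑) : V → E)) : Geometry.SimplicialComplex ℝ E :=
  Geometry.SimplicialComplex.ofAffineIndependent (𝕜 := ℝ)
    { faces := {s | s.Nonempty ∧ s ⊆ V}
      isRelLowerSet_faces := fun _ hs => ⟨hs.1, fun _ hts ht => ⟨ht, hts.trans hs.2⟩⟩ } <|
    hV.mono <| iUnion₂_subset fun _ hs => Finset.coe_subset.2 hs.2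

theorem widimLE_of_injective {X : Type*} [TopologicalSpace X] {ρ : X → X → ℝ} {ε : ℝ}
    (hρ : ∀ x, ρ x x < ε) {n : ℕ} {f : X → Fin n → ℝ} (hf : Continuous f)
    (hinj : Function.Injective f) (hbdd : Bornology.IsBounded (range f)) : WidimLE X ρ ε n := by
  classical
  obtain ⟨b, hb, -⟩ := exists_mem_interior_convexHull_affineBasis (x := (0 : Fin n → ℝ)) univ_mem
  let V : Finset (Fin n → ℝ) := Finset.univ.image b
  have hV : (V : Set (Fin n → ℝ)) = range b := by simp [V]
  have hVcard : V.card ≤ n + 1 := Finset.card_image_le.trans (by simp)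
  have hVind : AffineIndependent ℝ ((↑) : ↥(V : Set (Fin n → ℝ)) → Fin n → ℝ) :=
    hV ▸ b.ind.range
  let P := fullSimplex V hVind
  have hspace : convexHull ℝ (range b) ⊆ P.space := by
    rw [← hV]
    exact Geometry.SimplicialComplex.convexHull_subset_space ⟨by simp [V], Finset.Subset.rfl⟩
  have habs : Absorbs ℝ (convexHull ℝ (range b)) (range f) :=
    NormedSpace.isVonNBounded_of_isBounded ℝ hbdd (mem_interior_iff_mem_nhds.1 hb)
  obtain ⟨c, hcmaps, hc⟩ :=
    ((absorbs_iff_eventually_nhdsNE_zero.1 habs).and self_mem_nhdsWithin).exists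
  have hmem (x : X) : c • f x ∈ P.space := hspace (hcmaps (mem_range_self x))
  refine ⟨n, P, V.powerset.finite_toSet.subset fun s hs => Finset.mem_powerset.2 hs.2,
    fun s hs => (Finset.card_le_card hs.2).trans hVcard, fun x => ⟨c • f x, hmem x⟩,
    (hf.const_smul c).subtype_mk _, fun x y hxy => ?_⟩
  rw [hinj (smul_right_injective _ hc (congrArg Subtype.val hxy))]
  exact hρ y

/-- **Theorem (Lindenstrauss–Weiss).** For `0 < ε < 1` and `n ≥ 1`,
`Widim_ε([0,1]^n, d_{l^∞}) = n`: there is an `ε`-embedding of the cube into some polyhedron of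
dimension `n`, but none into a polyhedron of dimension `< n`.  (Here `Fin n → Set.Icc 0 1`
carries the product (= sup) metric, which is exactly `d_{l^∞}`.) -/
theorem widim_cube (ε : ℝ) (hε0 : 0 < ε) (hε1 : ε < 1) (n : ℕ) (hn : 0 < n) :
    WidimLE (Fin n → Set.Icc (0 : ℝ) 1) dist ε n ∧
      ∀ m : ℕ, m < n → ¬ WidimLE (Fin n → Set.Icc (0 : ℝ) 1) dist ε m := by
  have hbdd : Bornology.IsBounded (range fun (x : Fin n → Icc (0 : ℝ) 1) i => (x i : ℝ)) :=
    (isCompact_range (by fun_prop)).isBounded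
  have hinj : Function.Injective fun (x : Fin n → Icc (0 : ℝ) 1) i => (x i : ℝ) :=
    Subtype.val_injective.comp_left
  exact ⟨widimLE_of_injective (fun x => (dist_self x).trans_lt hε0) (by fun_prop) hinj hbdd,
    fun m hm => not_widimLE_of_card_lt hε1.le (by simpa using hm)⟩
end

section
/- Let $P$ be the cone over the three-point discrete space (a tripod: three unit segments glued at a common endpoint), with the graph metric $d$ in which each of the three edges has length one. Then for every $\epsilon \in (0,1)$ and every positive integer $n$, there does not exist an $\epsilon$-embedding of $(P^n, d_{l^\infty})$ into $\mathbb{R}^{2n-1}$; that is, there is no continuous map $f: P^n \to \mathbb{R}^{2n-1}$ such that $f(x) = f(y)$ implies $d_{l^\infty}(x,y) < \epsilon$. -/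
open Set Filter Topology
open scoped ENNReal NNReal symmDiff

/-!
Borsuk–Ulam is proved with mod 2 chains on ordered simplices. In the octahedral sphere, a cycle of
small simplices in one coordinate subsphere slides in small steps along segments to a vertex of the
next one, and the prisms it sweeps fill it by small simplices. So there are "hemispheres"
`c₀, c₁, …` of small simplices with `∂cᵢ₊₁ = cᵢ + τ cᵢ`, where `τ` is the antipodal chain map. If
`s₁, …, sₖ` are `ZMod 2`-valued functions with `s(-x) = s(x) + 1`, the cocycle `δs₁ ∪ ⋯ ∪ δsₖ`
evaluates to `1` on `cₖ`, by induction on `k`: it is the coboundary of `φ = s₁ ∪ δs₂ ∪ ⋯ ∪ δsₖ`,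
and `φ + τφ = δs₂ ∪ ⋯ ∪ δsₖ`. Hence every `sᵢ` is nonconstant on some common small simplex. Taking
for `sᵢ` the sign of the `i`-th coordinate of an odd map shows that this map takes arbitrarily small
values.

For the theorem, subtracting the median from a vector of `ℝ³` and truncating to `[0, 1]` gives a
continuous map onto the tripod. On the vectors `(0, p)` with `‖p‖∞ = 1` it sends `p` and `-p` to
points at distance at least `1`, so its `n`-th power maps the unit sphere of `(ℝ²)ⁿ` to `Pⁿ` with
antipodal points at distance at least `1`, and Borsuk–Ulam applies in dimension `2n`.
-/

/-- Mod 2 chains on ordered simplices with vertices in `X`: the list `[a₀, …, aₖ]` is a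
`k`-simplex, repeated vertices being allowed, and the empty list generates the augmentation in
degree `-1`. -/
abbrev ModTwoChain (X : Type*) := List X →₀ ZMod 2

namespace ModTwoChain

variable {X Y Z M : Type*} [AddCommGroup M] [Module (ZMod 2) M]

noncomputable section

/-- A single ordered simplex, as a chain. -/
def simplex (σ : List X) : ModTwoChain X := Finsupp.single σ 1

@[simp]
lemma simplex_nil_apply_nil : simplex ([] : List X) [] = 1 :=
  Finsupp.single_eq_same

@[simp]
lemma simplex_cons_apply_nil (a : X) (σ : List X) : simplex (a :: σ) [] = 0 :=
  Finsupp.single_eq_of_ne (List.cons_ne_nil a σ).symm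

/-- The linear extension to chains of a function on simplices. -/
def extend (F : List X → M) : ModTwoChain X →ₗ[ZMod 2] M := Finsupp.linearCombination (ZMod 2) F

@[simp]
lemma extend_simplex (F : List X → M) (σ : List X) : extend F (simplex σ) = F σ := by
  simp [extend, simplex]

lemma map_eq_of_simplex {f g : ModTwoChain X →ₗ[ZMod 2] M}
    (h : ∀ σ, f (simplex σ) = g (simplex σ)) (c : ModTwoChain X) : f c = g c :=
  LinearMap.congr_fun (Finsupp.lhom_ext' fun σ => LinearMap.ext_ring (h σ)) c

/-- The chains all of whose simplices belong to `K`. -/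
abbrev chainsIn (K : Set (List X)) : Submodule (ZMod 2) (ModTwoChain X) :=
  Finsupp.supported (ZMod 2) (ZMod 2) K

lemma simplex_mem_chainsIn {K : Set (List X)} {σ : List X} (hσ : σ ∈ K) :
    simplex σ ∈ chainsIn K :=
  Finsupp.single_mem_supported _ _ hσ

lemma chainsIn_eq_span (K : Set (List X)) :
    chainsIn K = Submodule.span (ZMod 2) (simplex '' K) :=
  Finsupp.supported_eq_span_single _ _

lemma map_mem_of_mem_chainsIn {f : ModTwoChain X →ₗ[ZMod 2] M} {K : Set (List X)}
    {W : Submodule (ZMod 2) M} (h : ∀ σ ∈ K, f (simplex σ) ∈ W) {c : ModTwoChain X}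
    (hc : c ∈ chainsIn K) : f c ∈ W := by
  have hle : chainsIn K ≤ W.comap f := by
    rw [chainsIn_eq_span, Submodule.span_le]
    rintro _ ⟨σ, hσ, rfl⟩
    exact h σ hσ
  exact hle hc

lemma map_eq_of_mem_chainsIn {f g : ModTwoChain X →ₗ[ZMod 2] M} {K : Set (List X)}
    (h : ∀ σ ∈ K, f (simplex σ) = g (simplex σ)) {c : ModTwoChain X} (hc : c ∈ chainsIn K) :
    f c = g c :=
  LinearMap.mem_eqLocus.1 <| show LinearMap.id c ∈ LinearMap.eqLocus f g from
    map_mem_of_mem_chainsIn h hc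

lemma exists_simplex_map_ne_zero {f : ModTwoChain X →ₗ[ZMod 2] M} {K : Set (List X)}
    {c : ModTwoChain X} (hc : c ∈ chainsIn K) (hf : f c ≠ 0) : ∃ σ ∈ K, f (simplex σ) ≠ 0 := by
  contrapose! hf
  exact map_eq_of_mem_chainsIn (g := 0) hf hc

/-- The cone with apex `v`. -/
def cone (v : X) : ModTwoChain X →ₗ[ZMod 2] ModTwoChain X := extend fun σ => simplex (v :: σ)

@[simp]
lemma cone_simplex (v : X) (σ : List X) : cone v (simplex σ) = simplex (v :: σ) :=
  extend_simplex _ _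

/-- The sum of the codimension one faces of a simplex, computed by viewing the simplex as the cone
over its last face. -/
def simplexBoundary : List X → ModTwoChain X
  | [] => 0
  | a :: σ => simplex σ + cone a (simplexBoundary σ)

/-- The augmented boundary operator. -/
def boundary : ModTwoChain X →ₗ[ZMod 2] ModTwoChain X := extend simplexBoundary

@[simp]
lemma boundary_simplex_nil : boundary (simplex ([] : List X)) = 0 := by
  simp [boundary, simplexBoundary]

@[simp]
lemma boundary_simplex_cons (a : X) (σ : List X) :
    boundary (simplex (a :: σ)) = simplex σ + cone a (boundary (simplex σ)) := by
  simp [boundary, simplexBoundary]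

lemma boundary_cone (v : X) (c : ModTwoChain X) :
    boundary (cone v c) = c + cone v (boundary c) :=
  map_eq_of_simplex (f := boundary ∘ₗ cone v) (g := .id + cone v ∘ₗ boundary)
    (fun σ => by simp) c

@[simp]
lemma boundary_boundary (c : ModTwoChain X) : boundary (boundary c) = 0 := by
  refine map_eq_of_simplex (f := boundary ∘ₗ boundary) (g := 0) (fun σ => ?_) c
  induction σ with
  | nil => simp
  | cons a σ ih =>
    simp only [LinearMap.comp_apply, LinearMap.zero_apply] at ih
    simp [boundary_cone, ih, ZModModule.add_self]

lemma cone_mem_chainsIn {v : X} {K L : Set (List X)} (h : ∀ σ ∈ K, v :: σ ∈ L)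
    {c : ModTwoChain X} (hc : c ∈ chainsIn K) : cone v c ∈ chainsIn L :=
  map_mem_of_mem_chainsIn (fun σ hσ => by simpa using simplex_mem_chainsIn (h σ hσ)) hc

lemma boundary_simplex_mem_chainsIn (σ : List X) :
    boundary (simplex σ) ∈ chainsIn {τ | τ ⊆ σ} := by
  induction σ with
  | nil => simp
  | cons a σ ih =>
    rw [boundary_simplex_cons]
    refine add_mem (simplex_mem_chainsIn (List.subset_cons_self a σ)) (cone_mem_chainsIn ?_ ih)
    exact fun τ hτ => List.cons_subset_cons a hτ

/-- The chain map induced by a map of vertices. -/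
def push (f : X → Y) : ModTwoChain X →ₗ[ZMod 2] ModTwoChain Y :=
  extend fun σ => simplex (σ.map f)

@[simp]
lemma push_simplex (f : X → Y) (σ : List X) : push f (simplex σ) = simplex (σ.map f) :=
  extend_simplex _ _

lemma push_push (g : Y → Z) (f : X → Y) (c : ModTwoChain X) :
    push g (push f c) = push (g ∘ f) c :=
  map_eq_of_simplex (f := push g ∘ₗ push f) (fun σ => by simp) c

@[simp]
lemma push_id (c : ModTwoChain X) : push id c = c :=
  map_eq_of_simplex (g := .id) (fun σ => by simp) c

lemma push_cone (f : X → Y) (v : X) (c : ModTwoChain X) :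
    push f (cone v c) = cone (f v) (push f c) :=
  map_eq_of_simplex (f := push f ∘ₗ cone v) (g := cone (f v) ∘ₗ push f) (fun σ => by simp) c

lemma boundary_push (f : X → Y) (c : ModTwoChain X) :
    boundary (push f c) = push f (boundary c) := by
  refine map_eq_of_simplex (f := boundary ∘ₗ push f) (g := push f ∘ₗ boundary) (fun σ => ?_) c
  induction σ with
  | nil => simp
  | cons a σ ih =>
    simp only [LinearMap.comp_apply, push_simplex] at ih
    simp [push_cone, ih]

/-- The prism swept by a simplex moving from its image under `f` to its image under `g`: the sum
of the `[f a₀, …, f aᵢ, g aᵢ, …, g aₖ]`. -/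
def simplexPrism (f g : X → Y) : List X → ModTwoChain Y
  | [] => 0
  | a :: σ => simplex (f a :: g a :: σ.map g) + cone (f a) (simplexPrism f g σ)

/-- The chain homotopy from `push f` to `push g`. -/
def prism (f g : X → Y) : ModTwoChain X →ₗ[ZMod 2] ModTwoChain Y := extend (simplexPrism f g)

@[simp]
lemma prism_simplex_nil (f g : X → Y) : prism f g (simplex []) = 0 := by
  simp [prism, simplexPrism]

@[simp]
lemma prism_simplex_cons (f g : X → Y) (a : X) (σ : List X) :
    prism f g (simplex (a :: σ)) =
      simplex (f a :: g a :: σ.map g) + cone (f a) (prism f g (simplex σ)) := by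
  simp [prism, simplexPrism]

lemma prism_cone (f g : X → Y) (v : X) (c : ModTwoChain X) :
    prism f g (cone v c) = cone (f v) (cone (g v) (push g c)) + cone (f v) (prism f g c) :=
  map_eq_of_simplex (f := prism f g ∘ₗ cone v)
    (g := cone (f v) ∘ₗ cone (g v) ∘ₗ push g + cone (f v) ∘ₗ prism f g) (fun σ => by simp) c

lemma boundary_prism (f g : X → Y) (c : ModTwoChain X) :
    boundary (prism f g c) = push f c + push g c + prism f g (boundary c) := by
  refine map_eq_of_simplex (f := boundary ∘ₗ prism f g)
    (g := push f + push g + prism f g ∘ₗ boundary) (fun σ => ?_) c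
  induction σ with
  | nil => simp [ZModModule.add_self]
  | cons a σ ih =>
    have hpush := boundary_push g (simplex σ)
    simp only [LinearMap.comp_apply, LinearMap.add_apply, push_simplex] at ih hpush ⊢
    simp only [prism_simplex_cons, boundary_simplex_cons, boundary_cone, prism_cone, map_add,
      List.map_cons, cone_simplex, ih, hpush]
    have hcancel := ZModModule.add_self (simplex (f a :: σ.map g))
    grind

lemma prism_simplex_mem_chainsIn (f g : X → Y) (σ : List X) :
    prism f g (simplex σ) ∈ chainsIn {τ | τ ⊆ σ.map f ++ σ.map g} := by
  induction σ with
  | nil => simp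
  | cons a σ ih =>
    rw [prism_simplex_cons]
    refine add_mem (simplex_mem_chainsIn ?_) (cone_mem_chainsIn ?_ ih)
    · simp
    · intro τ hτ
      simp only [Set.mem_ofPred_eq] at hτ ⊢
      grind

lemma boundary_mem_chainsIn {K : Set (List X)} (hK : ∀ σ ∈ K, ∀ τ ⊆ σ, τ ∈ K)
    {c : ModTwoChain X} (hc : c ∈ chainsIn K) : boundary c ∈ chainsIn K :=
  map_mem_of_mem_chainsIn
    (fun σ hσ => Finsupp.supported_mono (hK σ hσ) (boundary_simplex_mem_chainsIn σ)) hc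

/-- The cup product `s ∪ δω` of a `0`-cochain `s` with the coboundary of a cochain `ω`. -/
def cupCoboundary (s : X → ZMod 2) (ω : ModTwoChain X →ₗ[ZMod 2] ZMod 2) :
    ModTwoChain X →ₗ[ZMod 2] ZMod 2 :=
  extend fun
    | [] => 0
    | a :: σ => s a * ω (boundary (simplex (a :: σ)))

@[simp]
lemma cupCoboundary_simplex_nil (s : X → ZMod 2) (ω : ModTwoChain X →ₗ[ZMod 2] ZMod 2) :
    cupCoboundary s ω (simplex []) = 0 :=
  extend_simplex _ _

@[simp]
lemma cupCoboundary_simplex_cons (s : X → ZMod 2) (ω : ModTwoChain X →ₗ[ZMod 2] ZMod 2) (a : X)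
    (σ : List X) :
    cupCoboundary s ω (simplex (a :: σ)) = s a * ω (boundary (simplex (a :: σ))) :=
  extend_simplex _ _

lemma cupCoboundary_boundary_eq_zero {s : X → ZMod 2} {k : ZMod 2} {σ : List X}
    (hs : ∀ a ∈ σ, s a = k) (ω : ModTwoChain X →ₗ[ZMod 2] ZMod 2) :
    cupCoboundary s ω (boundary (simplex σ)) = 0 := by
  have hface : ∀ τ ∈ {τ | τ ⊆ σ},
      cupCoboundary s ω (simplex τ) = (k • ω ∘ₗ boundary) (simplex τ) := by
    rintro (_ | ⟨a, τ⟩) hτ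
    · simp
    · simp [hs a (hτ List.mem_cons_self)]
  rw [map_eq_of_mem_chainsIn hface (boundary_simplex_mem_chainsIn σ)]
  simp

/-- The cochain `φ` with coboundary `δs₁ ∪ ⋯ ∪ δsₖ`. -/
def signCochain : List (X → ZMod 2) → ModTwoChain X →ₗ[ZMod 2] ZMod 2
  | [] => Finsupp.lapply []
  | s :: ss => cupCoboundary s (signCochain ss)

lemma exists_ne_of_signCochain_boundary_ne_zero {ss : List (X → ZMod 2)} {σ : List X}
    (h : signCochain ss (boundary (simplex σ)) ≠ 0) {s : X → ZMod 2} (hs : s ∈ ss) :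
    ∃ a ∈ σ, ∃ b ∈ σ, s a ≠ s b := by
  induction ss generalizing σ with
  | nil => simp at hs
  | cons t ss ih =>
    obtain rfl | hs := List.mem_cons.1 hs
    · contrapose! h
      obtain _ | ⟨a, σ⟩ := σ
      · simp
      · exact cupCoboundary_boundary_eq_zero (fun b hb => h b hb a List.mem_cons_self) _
    · obtain ⟨τ, hτσ, hτ⟩ := exists_simplex_map_ne_zero (boundary_simplex_mem_chainsIn σ) h
      have hτ' : signCochain ss (boundary (simplex τ)) ≠ 0 := by
        obtain _ | ⟨a, τ⟩ := τ
        · simp [signCochain] at hτ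
        · exact right_ne_zero_of_mul (cupCoboundary_simplex_cons t _ a τ ▸ hτ)
      obtain ⟨a, ha, b, hb, hab⟩ := ih hτ' hs
      exact ⟨a, hτσ ha, b, hτσ hb, hab⟩

lemma push_apply_nil (f : X → Y) (c : ModTwoChain X) : push f c [] = c [] := by
  refine map_eq_of_simplex (f := Finsupp.lapply [] ∘ₗ push f) (g := Finsupp.lapply [])
    (fun σ => ?_) c
  cases σ <;> simp

/-- The simplices with all vertices in `V`. -/
def simplicesIn (V : Set X) : Set (List X) := {σ | ∀ x ∈ σ, x ∈ V}

lemma mem_simplicesIn_of_subset {V : Set X} : ∀ σ ∈ simplicesIn V, ∀ τ ⊆ σ, τ ∈ simplicesIn V :=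
  fun _ hσ _ hτ x hx => hσ x (hτ hx)

section Antipode

variable [InvolutiveNeg X] {V : Set X}

/-- The chain map induced by `x ↦ -x`. -/
abbrev antipode : ModTwoChain X →ₗ[ZMod 2] ModTwoChain X := push Neg.neg

lemma antipode_antipode (c : ModTwoChain X) : antipode (antipode c) = c := by
  rw [push_push, neg_comp_neg, push_id]

lemma cupCoboundary_antipode {s : X → ZMod 2} (hs : ∀ x ∈ V, s (-x) = s x + 1)
    {ω : ModTwoChain X →ₗ[ZMod 2] ZMod 2}
    (hω : ∀ c ∈ chainsIn (simplicesIn V), ω (boundary (antipode c)) = ω (boundary c))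
    {c : ModTwoChain X} (hc : c ∈ chainsIn (simplicesIn V)) :
    cupCoboundary s ω (antipode c) = cupCoboundary s ω c + ω (boundary c) := by
  refine map_eq_of_mem_chainsIn (f := cupCoboundary s ω ∘ₗ antipode)
    (g := cupCoboundary s ω + ω ∘ₗ boundary) (fun σ hσ => ?_) hc
  obtain _ | ⟨a, σ⟩ := σ
  · simp
  · have hω' := hω _ (simplex_mem_chainsIn hσ)
    simp only [push_simplex, List.map_cons] at hω'
    simp only [LinearMap.comp_apply, LinearMap.add_apply, push_simplex, List.map_cons,
      cupCoboundary_simplex_cons, hω', hs a (hσ a List.mem_cons_self)]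
    ring

variable {ss : List (X → ZMod 2)}

lemma signCochain_boundary_antipode (hss : ∀ s ∈ ss, ∀ x ∈ V, s (-x) = s x + 1)
    {c : ModTwoChain X} (hc : c ∈ chainsIn (simplicesIn V)) :
    signCochain ss (boundary (antipode c)) = signCochain ss (boundary c) := by
  rw [boundary_push]
  induction ss generalizing c with
  | nil => exact push_apply_nil _ _
  | cons s ss ih =>
    obtain ⟨hs, hss⟩ := List.forall_mem_cons.1 hss
    have hω : ∀ c ∈ chainsIn (simplicesIn V),
        signCochain ss (boundary (antipode c)) = signCochain ss (boundary c) :=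
      fun c hc => by rw [boundary_push, ih hss hc]
    simpa [signCochain] using
      cupCoboundary_antipode hs hω (boundary_mem_chainsIn mem_simplicesIn_of_subset hc)

/-- `IsHemisphere V k c`: the chain `c` is the last of chains `c₀, …, cₖ` with vertices in `V`,
where `c₀` is a point and `∂cᵢ₊₁` is the sum of `cᵢ` and its antipode. The model is the sequence
of closed hemispheres of dimensions `0, …, k` of a sphere. -/
inductive IsHemisphere (V : Set X) : ℕ → ModTwoChain X → Prop
  | point {v : X} (hv : v ∈ V) : IsHemisphere V 0 (simplex [v])
  | cap {k : ℕ} {c c' : ModTwoChain X} (hc : IsHemisphere V k c)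
      (hc' : c' ∈ chainsIn (simplicesIn V)) (hcc' : boundary c' = c + antipode c) :
      IsHemisphere V (k + 1) c'

namespace IsHemisphere

variable {k : ℕ} {c : ModTwoChain X}

lemma mem_chainsIn (hc : IsHemisphere V k c) : c ∈ chainsIn (simplicesIn V) := by
  cases hc with
  | point hv => exact simplex_mem_chainsIn (by simpa [simplicesIn] using hv)
  | cap _ hc' _ => exact hc'

lemma boundary_add_antipode (hc : IsHemisphere V k c) : boundary (c + antipode c) = 0 := by
  rw [map_add, boundary_push]
  cases hc with
  | point => simp [ZModModule.add_self]
  | cap _ _ hcc' =>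
    rw [hcc', map_add, antipode_antipode, add_comm (antipode _), ZModModule.add_self]

lemma signCochain_boundary (hc : IsHemisphere V k c) (hk : ss.length = k)
    (hss : ∀ s ∈ ss, ∀ x ∈ V, s (-x) = s x + 1) : signCochain ss (boundary c) = 1 := by
  induction hc generalizing ss with
  | point =>
    rw [List.length_eq_zero_iff.1 hk]
    simp [signCochain]
  | cap hc _ hcc' ih =>
    obtain ⟨s, ss, rfl⟩ := List.exists_cons_of_length_eq_add_one hk
    obtain ⟨hs, hss⟩ := List.forall_mem_cons.1 hss
    rw [hcc', map_add, signCochain, cupCoboundary_antipode hs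
      (fun c hc => signCochain_boundary_antipode hss hc) hc.mem_chainsIn, ← add_assoc,
      ZModModule.add_self, zero_add]
    exact ih (by simpa using hk) hss

lemma exists_simplex {K : Set (List X)} (hc : IsHemisphere V k c) (hcK : c ∈ chainsIn K)
    (hk : ss.length = k) (hss : ∀ s ∈ ss, ∀ x ∈ V, s (-x) = s x + 1) :
    ∃ σ ∈ K, σ ≠ [] ∧ ∀ s ∈ ss, ∃ a ∈ σ, ∃ b ∈ σ, s a ≠ s b := by
  have hne : (signCochain ss ∘ₗ boundary) c ≠ 0 := by
    simp [hc.signCochain_boundary hk hss]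
  obtain ⟨σ, hσK, hσ⟩ := exists_simplex_map_ne_zero hcK hne
  refine ⟨σ, hσK, ?_, fun s hs => exists_ne_of_signCochain_boundary_ne_zero hσ hs⟩
  rintro rfl
  simp at hσ

end IsHemisphere

end Antipode

end

end ModTwoChain

lemma dist_lineMap_lineMap_le {E : Type*} [SeminormedAddCommGroup E] [NormedSpace ℝ E]
    {C t t' : ℝ} (ht : t ∈ Icc (0 : ℝ) 1) (x : E) {y v : E} (hy : dist y v ≤ C) :
    dist (AffineMap.lineMap x v t) (AffineMap.lineMap y v t') ≤ dist x y + |t - t'| * C := by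
  have hmove : dist (AffineMap.lineMap x v t) (AffineMap.lineMap y v t) ≤ dist x y := by
    have hsub : (AffineMap.lineMap x v t : E) - AffineMap.lineMap y v t = (1 - t) • (x - y) := by
      simp only [AffineMap.lineMap_apply_module]
      module
    rw [dist_eq_norm, hsub, norm_smul, Real.norm_of_nonneg (sub_nonneg.2 ht.2), ← dist_eq_norm]
    exact mul_le_of_le_one_left dist_nonneg (sub_le_self _ ht.1)
  have hslide : dist (AffineMap.lineMap y v t) (AffineMap.lineMap y v t') ≤ |t - t'| * C := by
    rw [dist_lineMap_lineMap, Real.dist_eq]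
    gcongr
  exact (dist_triangle _ _ _).trans (add_le_add hmove hslide)

section OctahedralSphere

variable {m k : ℕ}

/-- The `k`-dimensional coordinate subsphere of the unit sphere of the `ℓ¹` norm on `ℝᵐ`. -/
def octahedralSphere (m k : ℕ) : Set (PiLp 1 fun _ : Fin m => ℝ) :=
  {x | ‖x‖ = 1 ∧ ∀ j : Fin m, k < j → x j = 0}

lemma octahedralSphere_subset_sphere :
    octahedralSphere m k ⊆ Metric.sphere (0 : PiLp 1 fun _ : Fin m => ℝ) 1 :=
  fun _ hx => mem_sphere_zero_iff_norm.2 hx.1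

lemma neg_mem_octahedralSphere {x : PiLp 1 fun _ : Fin m => ℝ} (hx : x ∈ octahedralSphere m k) :
    -x ∈ octahedralSphere m k :=
  ⟨by rw [norm_neg, hx.1], fun j hj => by simp [hx.2 j hj]⟩

lemma single_mem_octahedralSphere {i : Fin m} (hi : (i : ℕ) ≤ k) :
    PiLp.single 1 i 1 ∈ octahedralSphere m k :=
  ⟨by simp, fun j hj => PiLp.single_eq_of_ne 1 (by omega) _⟩

-- The `ℓ¹` norm is affine on a segment whose endpoints have disjoint supports.
lemma convexJoin_subset_octahedralSphere (hk : k + 1 < m) :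
    convexJoin ℝ (octahedralSphere m k) {PiLp.single 1 ⟨k + 1, hk⟩ 1} ⊆
      octahedralSphere m (k + 1) := by
  rw [convexJoin_singleton_right, Set.iUnion₂_subset_iff]
  rintro x ⟨hx, hxk⟩ _ ⟨a, b, ha, hb, hab, rfl⟩
  set e : PiLp 1 fun _ : Fin m => ℝ := PiLp.single 1 ⟨k + 1, hk⟩ 1
  have hdisj (j : Fin m) : x j = 0 ∨ e j = 0 := by
    obtain rfl | hj := eq_or_ne j ⟨k + 1, hk⟩
    · exact .inl (hxk _ (Nat.lt_succ_self k))
    · exact .inr (PiLp.single_eq_of_ne 1 hj _)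
  constructor
  · have hcoord (j : Fin m) : ‖(a • x + b • e) j‖ = a * ‖x j‖ + b * ‖e j‖ := by
      obtain h | h := hdisj j <;> simp [h, abs_of_nonneg, ha, hb]
    have he : ‖e‖ = 1 := by simp [e]
    rw [PiLp.norm_eq_of_L1] at hx he
    rw [PiLp.norm_eq_of_L1, Finset.sum_congr rfl fun j _ => hcoord j, Finset.sum_add_distrib,
      ← Finset.mul_sum, ← Finset.mul_sum, hx, he, mul_one, mul_one, hab]
  · intro j hj
    have hje : e j = 0 := PiLp.single_eq_of_ne 1 (by rintro rfl; exact hj.false) _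
    simp [hxk j (by omega), hje]

end OctahedralSphere

namespace ModTwoChain

section Rips

variable {X : Type*} [PseudoMetricSpace X] {V W : Set X} {δ : ℝ}

/-- The simplices of the Vietoris–Rips complex of `V` at scale `δ`. -/
def rips (V : Set X) (δ : ℝ) : Set (List X) :=
  {σ | (∀ x ∈ σ, x ∈ V) ∧ ∀ x ∈ σ, ∀ y ∈ σ, dist x y < δ}

lemma rips_subset_rips (hVW : V ⊆ W) : rips V δ ⊆ rips W δ :=
  fun _ hσ => ⟨fun x hx => hVW (hσ.1 x hx), hσ.2⟩

lemma rips_subset_simplicesIn (hVW : V ⊆ W) : rips V δ ⊆ simplicesIn W :=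
  fun _ hσ x hx => hVW (hσ.1 x hx)

end Rips

section Filling

variable {E : Type*} [SeminormedAddCommGroup E] [NormedSpace ℝ E] {K : Set E} {v : E}

lemma prism_lineMap_mem_chainsIn {C δ δ' t t' : ℝ} (hK : K ⊆ Metric.closedBall v C)
    (ht : t ∈ Icc (0 : ℝ) 1) (ht' : t' ∈ Icc (0 : ℝ) 1) (hδ : δ + |t - t'| * C ≤ δ')
    {z : ModTwoChain E} (hz : z ∈ chainsIn (rips K δ)) :
    prism (AffineMap.lineMap · v t) (AffineMap.lineMap · v t') z ∈
      chainsIn (rips (convexJoin ℝ K {v}) δ') := by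
  refine map_mem_of_mem_chainsIn (fun σ hσ => ?_) hz
  refine Finsupp.supported_mono (fun τ hτ => ?_) (prism_simplex_mem_chainsIn _ _ σ)
  obtain ⟨hσK, hσδ⟩ := hσ
  have hvertex : ∀ p ∈ τ, ∃ x ∈ σ, ∃ s ∈ Icc (0 : ℝ) 1, (s = t ∨ s = t') ∧
      AffineMap.lineMap x v s = p := by
    intro p hp
    obtain hp | hp := List.mem_append.1 (hτ hp) <;> obtain ⟨x, hx, rfl⟩ := List.mem_map.1 hp
    · exact ⟨x, hx, t, ht, .inl rfl, rfl⟩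
    · exact ⟨x, hx, t', ht', .inr rfl, rfl⟩
  constructor
  · intro p hp
    obtain ⟨x, hx, s, hs, -, rfl⟩ := hvertex p hp
    rw [convexJoin_singleton_right, Set.mem_iUnion₂]
    exact ⟨x, hσK x hx, segment_eq_image_lineMap ℝ x v ▸ Set.mem_image_of_mem _ hs⟩
  · intro p hp q hq
    obtain ⟨x, hx, s, hs, hst, rfl⟩ := hvertex p hp
    obtain ⟨y, hy, r, -, hrt, rfl⟩ := hvertex q hq
    have hyv : dist y v ≤ C := hK (hσK y hy)
    have hsr : |s - r| ≤ |t - t'| := by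
      obtain rfl | rfl := hst <;> obtain rfl | rfl := hrt <;> simp [abs_sub_comm]
    calc dist (AffineMap.lineMap x v s) (AffineMap.lineMap y v r)
        ≤ dist x y + |s - r| * C := dist_lineMap_lineMap_le hs x hyv
      _ < δ + |t - t'| * C := add_lt_add_of_lt_of_le (hσδ x hx y hy)
        (mul_le_mul_of_nonneg_right hsr (dist_nonneg.trans hyv))
      _ ≤ δ' := hδ

lemma exists_boundary_eq (hK : Bornology.IsBounded K) (v : E) {δ δ' : ℝ} (hδ : δ < δ')
    {z : ModTwoChain E} (hz : z ∈ chainsIn (rips K δ)) (hz_cycle : boundary z = 0)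
    (hz_const : push (fun _ => v) z = 0) :
    ∃ c ∈ chainsIn (rips (convexJoin ℝ K {v}) δ'), boundary c = z := by
  obtain ⟨C, hC⟩ := hK.subset_closedBall v
  obtain ⟨N, hN⟩ := exists_nat_gt (max 0 (C / (δ' - δ)))
  obtain ⟨hN0, hNC⟩ := max_lt_iff.1 hN
  let slide (k : ℕ) (x : E) : E := AffineMap.lineMap x v (k / N : ℝ)
  have hmem (k : ℕ) (hk : k ≤ N) : (k / N : ℝ) ∈ Icc (0 : ℝ) 1 :=
    ⟨by positivity, (div_le_one hN0).2 (Nat.cast_le.2 hk)⟩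
  have hstep (k : ℕ) : δ + |(k / N : ℝ) - (k + 1 : ℕ) / N| * C ≤ δ' := by
    have habs : |(k / N : ℝ) - (k + 1 : ℕ) / N| = 1 / N := by
      rw [← sub_div, abs_div, abs_of_pos hN0]
      simp
    rw [habs, one_div_mul_eq_div]
    linarith [(div_lt_comm₀ (sub_pos.2 hδ) hN0).1 hNC]
  refine ⟨∑ k ∈ Finset.range N, prism (slide k) (slide (k + 1)) z, sum_mem fun k hk => ?_, ?_⟩
  · have hk := Finset.mem_range.1 hk
    exact prism_lineMap_mem_chainsIn hC (hmem k hk.le) (hmem (k + 1) hk) (hstep k) hz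
  · have hstart : slide 0 = id := by ext x; simp [slide]
    have hend : slide N = fun _ => v := by ext x; simp [slide, hN0.ne']
    calc boundary (∑ k ∈ Finset.range N, prism (slide k) (slide (k + 1)) z)
        = ∑ k ∈ Finset.range N, (push (slide (k + 1)) z - push (slide k) z) := by
          simp only [map_sum, boundary_prism, hz_cycle, map_zero, add_zero, ZModModule.sub_eq_add]
          exact Finset.sum_congr rfl fun k _ => add_comm _ _
      _ = push (slide N) z - push (slide 0) z :=
          Finset.sum_range_sub (fun k => push (slide k) z) _
      _ = z := by rw [hstart, hend, hz_const, push_id, ZModModule.sub_eq_add, zero_add]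

end Filling

section OctahedralSphere

variable {m k : ℕ}

lemma antipode_mem_chainsIn_rips {δ : ℝ} {c : ModTwoChain (PiLp 1 fun _ : Fin m => ℝ)}
    (hc : c ∈ chainsIn (rips (octahedralSphere m k) δ)) :
    antipode c ∈ chainsIn (rips (octahedralSphere m k) δ) := by
  refine map_mem_of_mem_chainsIn (fun σ hσδ => ?_) hc
  obtain ⟨hσ, hσδ⟩ := hσδ
  rw [push_simplex]
  refine simplex_mem_chainsIn ⟨?_, ?_⟩
  · exact List.forall_mem_map.2 fun x hx => neg_mem_octahedralSphere (hσ x hx)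
  · simp only [List.forall_mem_map, dist_neg_neg]
    exact hσδ

lemma exists_isHemisphere_octahedralSphere (hk : k < m) {δ : ℝ} (hδ : 0 < δ) :
    ∃ c, IsHemisphere (Metric.sphere (0 : PiLp 1 fun _ : Fin m => ℝ) 1) k c ∧
      c ∈ chainsIn (rips (octahedralSphere m k) δ) := by
  induction k generalizing δ with
  | zero =>
    have he := single_mem_octahedralSphere (i := ⟨0, hk⟩) le_rfl
    exact ⟨_, .point (octahedralSphere_subset_sphere he),
      simplex_mem_chainsIn ⟨by simpa using he, by simpa using hδ⟩⟩
  | succ k ih =>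
    obtain ⟨c, hc, hcδ⟩ := ih (by omega) (half_pos hδ)
    have hbounded : Bornology.IsBounded (octahedralSphere m k) :=
      Metric.isBounded_sphere.subset octahedralSphere_subset_sphere
    obtain ⟨c', hc'δ, hc'⟩ := exists_boundary_eq hbounded (PiLp.single 1 ⟨k + 1, hk⟩ 1)
      (half_lt_self hδ) (add_mem hcδ (antipode_mem_chainsIn_rips hcδ)) hc.boundary_add_antipode
      (by rw [map_add, push_push]; exact ZModModule.add_self _)
    replace hc'δ : c' ∈ chainsIn (rips (octahedralSphere m (k + 1)) δ) :=
      Finsupp.supported_mono (rips_subset_rips (convexJoin_subset_octahedralSphere hk)) hc'δ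
    have hc'_sphere : c' ∈ chainsIn (simplicesIn (Metric.sphere 0 1)) :=
      Finsupp.supported_mono (rips_subset_simplicesIn octahedralSphere_subset_sphere) hc'δ
    exact ⟨c', hc.cap hc'_sphere hc', hc'δ⟩

end OctahedralSphere

end ModTwoChain

lemma exists_sign_of_odd {X R : Type*} [InvolutiveNeg X] [Ring R] [LinearOrder R]
    [IsOrderedRing R] {V : Set X} (hV : ∀ x ∈ V, -x ≠ x) {g : X → R} (hg : ∀ x ∈ V, g (-x) = -g x) :
    ∃ s : X → ZMod 2, (∀ x ∈ V, s (-x) = s x + 1) ∧ ∀ x y, s x ≠ s y → g x * g y ≤ 0 := by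
  classical
  -- The linear order on `X` only serves to break the tie between `x` and `-x` where `g` vanishes.
  obtain ⟨_, -⟩ := exists_wellFoundedLT X
  let IsMinus (x : X) : Prop := g x < 0 ∨ g x = 0 ∧ x < -x
  have hflip : ∀ x ∈ V, (IsMinus (-x) ↔ ¬ IsMinus x) := by
    intro x hx
    have hne := hV x hx
    simp only [IsMinus, hg x hx, neg_neg]
    grind
  have hsign : ∀ x y, IsMinus x → ¬ IsMinus y → g x ≤ 0 ∧ 0 ≤ g y := by grind
  refine ⟨fun x => if IsMinus x then 1 else 0, fun x hx => ?_, fun x y hxy => ?_⟩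
  · by_cases hx' : IsMinus x <;> simp [hflip x hx, hx', CharTwo.add_self_eq_zero]
  · by_cases hx : IsMinus x <;> by_cases hy : IsMinus y
    · simp [hx, hy] at hxy
    · exact mul_nonpos_of_nonpos_of_nonneg (hsign x y hx hy).1 (hsign x y hx hy).2
    · exact mul_nonpos_of_nonneg_of_nonpos (hsign y x hy hx).2 (hsign y x hy hx).1
    · simp [hx, hy] at hxy

section BorsukUlam

open Metric

open ModTwoChain in
lemma exists_rips_of_odd_coordinates {m d : ℕ} (hd : d < m)
    {f : (PiLp 1 fun _ : Fin m => ℝ) → Fin d → ℝ} (hf : ∀ x ∈ sphere 0 1, f (-x) = -f x)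
    {δ : ℝ} (hδ : 0 < δ) :
    ∃ σ ∈ rips (sphere (0 : PiLp 1 fun _ : Fin m => ℝ) 1) δ, σ ≠ [] ∧
      ∀ j, ∃ a ∈ σ, ∃ b ∈ σ, f a j * f b j ≤ 0 := by
  have hne : ∀ x ∈ sphere (0 : PiLp 1 fun _ : Fin m => ℝ) 1, -x ≠ x := fun x hx h =>
    ne_neg_of_mem_unit_sphere ℝ ⟨x, hx⟩ (Subtype.ext h.symm)
  choose s hs_antipode hs_sign using fun j : Fin d =>
    exists_sign_of_odd hne (g := (f · j)) fun x hx => congrFun (hf x hx) j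
  obtain ⟨c, hc, hcδ⟩ := exists_isHemisphere_octahedralSphere hd hδ
  obtain ⟨σ, hσ, hσne, hsσ⟩ := hc.exists_simplex
    (Finsupp.supported_mono (rips_subset_rips octahedralSphere_subset_sphere) hcδ)
    (List.length_ofFn (f := s)) (by simpa [List.mem_ofFn] using hs_antipode)
  refine ⟨σ, hσ, hσne, fun j => ?_⟩
  obtain ⟨a, ha, b, hb, hab⟩ := hsσ (s j) (List.mem_ofFn.2 ⟨j, rfl⟩)
  exact ⟨a, ha, b, hb, hs_sign j a b hab⟩

lemma abs_le_dist_of_mul_nonpos {a b : ℝ} (h : a * b ≤ 0) : |a| ≤ dist a b := by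
  rw [Real.dist_eq]
  obtain ⟨ha, hb⟩ | ⟨ha, hb⟩ := mul_nonpos_iff.1 h
  · exact abs_le_abs_of_nonneg ha (by linarith)
  · exact abs_le_abs_of_nonpos ha (by linarith)

lemma exists_zero_of_odd_on_l1Sphere {m d : ℕ} (hd : d < m)
    {f : (PiLp 1 fun _ : Fin m => ℝ) → Fin d → ℝ} (hf_cont : ContinuousOn f (sphere 0 1))
    (hf : ∀ x ∈ sphere 0 1, f (-x) = -f x) : ∃ x ∈ sphere 0 1, f x = 0 := by
  by_contra! hzero
  have hcompact : IsCompact (sphere (0 : PiLp 1 fun _ : Fin m => ℝ) 1) := isCompact_sphere 0 1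
  have hunif := hcompact.uniformContinuousOn_of_continuous hf_cont
  obtain ⟨η, hη, hfη⟩ : ∃ η > 0, ∀ x ∈ sphere 0 1, η ≤ ‖f x‖ :=
    hcompact.exists_forall_le' hf_cont.norm fun x hx => norm_pos_iff.2 (hzero x hx)
  obtain ⟨δ, hδ, hfδ⟩ := Metric.uniformContinuousOn_iff.1 hunif (η / 2) (half_pos hη)
  obtain ⟨σ, ⟨hσ, hσδ⟩, hσne, hsign⟩ := exists_rips_of_odd_coordinates hd hf hδ
  obtain ⟨x, hx⟩ := List.exists_mem_of_ne_nil σ hσne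
  refine (hfη x (hσ x hx)).not_gt ((pi_norm_lt_iff hη).2 fun j => ?_)
  obtain ⟨a, ha, b, hb, hab⟩ := hsign j
  have hclose {y z : _} (hy : y ∈ σ) (hz : z ∈ σ) : dist (f y j) (f z j) < η / 2 :=
    (dist_le_pi_dist _ _ j).trans_lt (hfδ y (hσ y hy) z (hσ z hz) (hσδ y hy z hz))
  calc ‖f x j‖ ≤ dist (f x j) (f a j) + |f a j| := by
        rw [← Real.norm_eq_abs, ← dist_zero_right, ← dist_zero_right]
        exact dist_triangle _ _ _
    _ ≤ dist (f x j) (f a j) + dist (f a j) (f b j) := by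
        gcongr
        exact abs_le_dist_of_mul_nonpos hab
    _ < η / 2 + η / 2 := add_lt_add (hclose hx ha) (hclose ha hb)
    _ = η := add_halves η

theorem borsuk_ulam {E F : Type*} [NormedAddCommGroup E] [NormedSpace ℝ E]
    [NormedAddCommGroup F] [NormedSpace ℝ F] [FiniteDimensional ℝ F]
    (hFE : Module.finrank ℝ F < Module.finrank ℝ E) {f : E → F}
    (hf : ContinuousOn f (sphere 0 1)) : ∃ x ∈ sphere 0 1, f x = f (-x) := by
  have : FiniteDimensional ℝ E := Module.finite_of_finrank_pos (Nat.zero_lt_of_lt hFE)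
  let e : (PiLp 1 fun _ : Fin (Module.finrank ℝ E) => ℝ) ≃L[ℝ] E :=
    (PiLp.continuousLinearEquiv 1 ℝ _).trans (.ofFinrankEq (by simp))
  let e' : F ≃L[ℝ] (Fin (Module.finrank ℝ F) → ℝ) := .ofFinrankEq (by simp)
  let radial (x : PiLp 1 fun _ : Fin (Module.finrank ℝ E) => ℝ) : E := ‖e x‖⁻¹ • e x
  have he : ∀ x ∈ sphere 0 1, ‖e x‖ ≠ 0 := fun x hx =>
    norm_ne_zero_iff.2 ((map_ne_zero_iff e e.injective).2 (ne_zero_of_mem_unit_sphere ⟨x, hx⟩))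
  have hradial : MapsTo radial (sphere 0 1) (sphere 0 1) := fun x hx => by
    simp [radial, norm_smul, inv_mul_cancel₀ (he x hx)]
  have hradial_neg (x) : radial (-x) = -radial x := by simp [radial]
  have hradial_cont : ContinuousOn radial (sphere 0 1) :=
    (e.continuous.norm.continuousOn.inv₀ he).smul e.continuous.continuousOn
  obtain ⟨x, hx, hfx⟩ := exists_zero_of_odd_on_l1Sphere hFE
    (f := fun x => e' (f (radial x) - f (-radial x)))
    (e'.continuous.comp_continuousOn ((hf.comp hradial_cont hradial).sub
      (hf.comp hradial_cont.neg fun x hx => by simpa using hradial hx)))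
    (fun x _ => by rw [hradial_neg, neg_neg, ← map_neg, neg_sub])
  exact ⟨radial x, hradial hx, sub_eq_zero.1 (e'.map_eq_zero_iff.1 hfx)⟩

end BorsukUlam

section Tripod

/-- The median of three real numbers. -/
noncomputable def median (v : Fin 3 → ℝ) : ℝ :=
  max (min (v 0) (v 1)) (min (max (v 0) (v 1)) (v 2))

lemma median_neg (v : Fin 3 → ℝ) : median (-v) = -median v := by
  simp only [median, Pi.neg_apply, min_neg_neg, max_neg_neg]
  grind

lemma continuous_median : Continuous median := by
  unfold median
  fun_prop

lemma le_median_or_le_median (v : Fin 3 → ℝ) {i j : Fin 3} (hij : i ≠ j) :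
    v i ≤ median v ∨ v j ≤ median v := by
  unfold median
  fin_cases i <;> fin_cases j <;> grind

/-- The tripod point whose only nonzero coordinate, if any, is at the index of the largest entry of
`v`, and equals the excess of that entry over the median, truncated at `1`. -/
noncomputable def tripodPoint (v : Fin 3 → ℝ) : TripodSet :=
  ⟨fun i => max 0 (min 1 (v i - median v)),
    fun _ => ⟨le_max_left _ _, max_le zero_le_one (min_le_left _ _)⟩,
    fun _ _ hij => (le_median_or_le_median v hij).imp
      (fun h => max_eq_left (min_le_of_right_le (sub_nonpos.2 h)))
      (fun h => max_eq_left (min_le_of_right_le (sub_nonpos.2 h)))⟩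

lemma continuous_tripodPoint : Continuous tripodPoint := by
  have := continuous_median
  unfold tripodPoint
  fun_prop

lemma abs_clamp_sub_clamp_neg (u : ℝ) :
    |max 0 (min 1 u) - max 0 (min 1 (-u))| = min 1 |u| := by
  simp only [abs, min_def, max_def]
  split_ifs <;> linarith

lemma min_one_abs_sub_le_tripodDist (v : Fin 3 → ℝ) {i j : Fin 3} (hij : i ≠ j) :
    min 1 |v i - v j| ≤ tripodDist (tripodPoint v) (tripodPoint (-v)) := by
  have hcoord (k : Fin 3) : |(tripodPoint v).1 k - (tripodPoint (-v)).1 k| =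
      min 1 |v k - median v| := by
    rw [← abs_clamp_sub_clamp_neg]
    simp [tripodPoint, median_neg, neg_add_eq_sub]
  have hnonneg (k : Fin 3) : 0 ≤ min 1 |v k - median v| := le_min zero_le_one (abs_nonneg _)
  calc min 1 |v i - v j| ≤ min 1 |v i - median v| + min 1 |v j - median v| := by grind
    _ = ∑ k ∈ {i, j}, min 1 |v k - median v| :=
      (Finset.sum_pair (f := fun k => min 1 |v k - median v|) hij).symm
    _ ≤ ∑ k, min 1 |v k - median v| := Finset.sum_le_univ_sum_of_nonneg hnonneg
    _ = tripodDist (tripodPoint v) (tripodPoint (-v)) := by simp only [tripodDist, hcoord]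

lemma exists_norm_apply_eq_norm {ι : Type*} [Fintype ι] {G : ι → Type*}
    [∀ i, SeminormedAddCommGroup (G i)] {x : ∀ i, G i} (hx : ‖x‖ ≠ 0) : ∃ i, ‖x i‖ = ‖x‖ := by
  by_contra! h
  have hlt : ∀ i, ‖x i‖ < ‖x‖ := fun i => (norm_le_pi_norm x i).lt_of_ne (h i)
  exact ((pi_norm_lt_iff ((norm_nonneg x).lt_of_ne' hx)).2 hlt).false

lemma one_le_tripodDist_of_norm_eq_one {p : Fin 2 → ℝ} (hp : ‖p‖ = 1) :
    1 ≤ tripodDist (tripodPoint (Matrix.vecCons 0 p)) (tripodPoint (-Matrix.vecCons 0 p)) := by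
  obtain ⟨i, hi⟩ := exists_norm_apply_eq_norm (hp.trans_ne one_ne_zero)
  simpa [← Real.norm_eq_abs, hi, hp] using
    min_one_abs_sub_le_tripodDist (Matrix.vecCons 0 p) (Fin.succ_ne_zero i)

lemma tripodDist_le_tripodDistInf {n : ℕ} (x y : Fin n → TripodSet) (i : Fin n) :
    tripodDist (x i) (y i) ≤ tripodDistInf x y :=
  le_csSup (finite_range _).bddAbove ⟨i, rfl⟩

end Tripod

theorem tripod_power_no_eps_embedding_general {n : ℕ} {F : Type*} [NormedAddCommGroup F]
    [NormedSpace ℝ F] [FiniteDimensional ℝ F] (hF : Module.finrank ℝ F < 2 * n)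
    {f : (Fin n → TripodSet) → F} (hf : Continuous f) :
    ∃ x y, f x = f y ∧ 1 ≤ tripodDistInf x y := by
  let toTripods (p : Fin n → Fin 2 → ℝ) (i : Fin n) : TripodSet :=
    tripodPoint (Matrix.vecCons 0 (p i))
  have hcont : Continuous toTripods := continuous_pi fun i =>
    continuous_tripodPoint.comp (continuous_const.matrixVecCons (continuous_apply i))
  have hdim : Module.finrank ℝ F < Module.finrank ℝ (Fin n → Fin 2 → ℝ) := by
    simpa [Module.finrank_pi_fintype, mul_comm n] using hF
  obtain ⟨p, hp, hfp⟩ := borsuk_ulam hdim (hf.comp hcont).continuousOn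
  rw [mem_sphere_zero_iff_norm] at hp
  obtain ⟨i, hi⟩ := exists_norm_apply_eq_norm (hp.trans_ne one_ne_zero)
  refine ⟨toTripods p, toTripods (-p), hfp, ?_⟩
  calc 1 ≤ tripodDist (toTripods p i) (toTripods (-p) i) := by
        simpa [toTripods, Matrix.neg_cons] using one_le_tripodDist_of_norm_eq_one (hi.trans hp)
    _ ≤ tripodDistInf (toTripods p) (toTripods (-p)) := tripodDist_le_tripodDistInf _ _ i

/-- **Theorem (Lindenstrauss–Tsukamoto).** For every `ε ∈ (0,1)` and every `n ≥ 1` there is no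
`ε`-embedding of `(P^n, d_{l^∞})` into `ℝ^{2n-1}`, where `P` is the tripod with the graph
distance in which all three edges have length one. -/
theorem tripod_power_no_eps_embedding (ε : ℝ) (hε0 : 0 < ε) (hε1 : ε < 1)
    (n : ℕ) (hn : 0 < n) :
    ¬ ∃ f : (Fin n → ↥TripodSet) → (Fin (2 * n - 1) → ℝ),
        Continuous f ∧ ∀ x y, f x = f y → tripodDistInf x y < ε := by
  rintro ⟨f, hf, hfε⟩
  have hdim : Module.finrank ℝ (Fin (2 * n - 1) → ℝ) < 2 * n := by
    rw [Module.finrank_fin_fun]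
    omega
  obtain ⟨x, y, hfxy, hxy⟩ := tripod_power_no_eps_embedding_general hdim hf
  exact (hxy.trans_lt (hfε x y hfxy)).not_gt hε1
end
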